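/- Let Σ be a real symmetric positive definite n×n matrix with largest eigenvalue λ₁, let M ≥ 1 be a natural number, and let c > 0 and σ > 0. Then c²·M²·Tr(Σ·(c²·M·Σ + σ²·I)⁻¹·Σ) ≤ c²·M²·n·λ₁² / (c²·M·λ₁ + σ²). -/

import Mathlib

open Matrix

/-! By the functional calculus, `S (a S + b)⁻¹ S` is `f(S)` for `f x = x² / (a x + b)`, so its trace
is the sum of `f` over the eigenvalues of `S`. Since `f` is increasing on `[0, ∞)`, each of these
`n` summands is at most the value of `f` at the largest eigenvalue. -/

theorem monotoneOn_sq_div_mul_add {K : Type*} [Field K] [LinearOrder K] [IsStrictOrderedRing K]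
    {a b : K} (ha : 0 ≤ a) (hb : 0 < b) :
    MonotoneOn (fun x => x ^ 2 / (a * x + b)) (Set.Ici 0) := by
  intro x (hx : 0 ≤ x) y (hy : 0 ≤ y) hxy
  have cross_mul : x ^ 2 * (a * y + b) ≤ y ^ 2 * (a * x + b) :=
    calc x ^ 2 * (a * y + b) = a * x * y * x + b * x ^ 2 := by ring
      _ ≤ a * x * y * y + b * y ^ 2 := by gcongr
      _ = y ^ 2 * (a * x + b) := by ring
  exact (div_le_div_iff₀ (by positivity) (by positivity)).2 cross_mul

section FunctionalCalculus

variable {𝒜 : Type*} [Ring 𝒜] [StarRing 𝒜] [TopologicalSpace 𝒜] [Algebra ℝ 𝒜]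
  [ContinuousFunctionalCalculus ℝ 𝒜 IsSelfAdjoint] {T : 𝒜}

theorem mul_cfc_mul_self (hT : IsSelfAdjoint T) {f : ℝ → ℝ} (hf : ContinuousOn f (spectrum ℝ T)) :
    T * cfc f T * T = cfc (fun x => x ^ 2 * f x) T :=
  calc T * cfc f T * T = cfc (fun x => x) T * cfc f T * cfc (fun x => x) T := by rw [cfc_id' ℝ T]
    _ = cfc (fun x => x * f x * x) T := by
      rw [← cfc_mul (fun x => x) f T, ← cfc_mul (fun x => x * f x) (fun x => x) T]
    _ = cfc (fun x => x ^ 2 * f x) T := by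
      congr! 2 with x
      ring

theorem cfc_mul_add_const (hT : IsSelfAdjoint T) (a b : ℝ) :
    cfc (fun x => a * x + b) T = a • T + b • 1 := by
  rw [cfc_add_const b (fun x => a * x) T, cfc_const_mul_id a T, Algebra.algebraMap_eq_smul_one]

theorem mul_ringInverse_mul_self_eq_cfc (hT : IsSelfAdjoint T) {a b : ℝ}
    (h : ∀ x ∈ spectrum ℝ T, a * x + b ≠ 0) :
    T * Ring.inverse (a • T + b • 1) * T = cfc (fun x => x ^ 2 / (a * x + b)) T := by
  have h_cont : ContinuousOn (fun x => (a * x + b)⁻¹) (spectrum ℝ T) :=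
    ContinuousOn.inv₀ (by fun_prop) h
  rw [← cfc_mul_add_const hT, ← cfc_inv _ T h, mul_cfc_mul_self hT h_cont]
  simp only [div_eq_mul_inv]

end FunctionalCalculus

section Matrix

variable {𝕜 n : Type*} [RCLike 𝕜] [Fintype n] [DecidableEq n] {A : Matrix n n 𝕜}

theorem trace_cfc_eq_sum (hA : A.IsHermitian) (f : ℝ → ℝ) :
    (cfc f A).trace = ∑ i, (f (hA.eigenvalues i) : 𝕜) := by
  rw [hA.cfc_eq, IsHermitian.cfc, Unitary.conjStarAlgAut_apply, trace_mul_cycle,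
    Unitary.coe_star_mul_self, one_mul, trace_diagonal]
  rfl

theorem re_trace_cfc_le (hA : A.IsHermitian) {f : ℝ → ℝ} {C : ℝ}
    (hf : ∀ i, f (hA.eigenvalues i) ≤ C) :
    RCLike.re (cfc f A).trace ≤ Fintype.card n * C := by
  rw [trace_cfc_eq_sum hA, ← RCLike.ofReal_sum, RCLike.ofReal_re, ← nsmul_eq_mul]
  exact Finset.sum_le_card_nsmul _ _ _ fun i _ => hf i

open scoped ComplexOrder in
theorem stmt1_general (hA : A.PosSemidef) {a b l : ℝ} (ha : 0 ≤ a) (hb : 0 < b)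
    (hl : ∀ i, hA.1.eigenvalues i ≤ l) :
    RCLike.re (A * (a • A + b • (1 : Matrix n n 𝕜))⁻¹ * A).trace ≤
      Fintype.card n * (l ^ 2 / (a * l + b)) := by
  have h_nonneg : ∀ i, 0 ≤ hA.1.eigenvalues i := hA.eigenvalues_nonneg
  have h_ne : ∀ x ∈ spectrum ℝ A, a * x + b ≠ 0 := by
    rw [hA.1.spectrum_real_eq_range_eigenvalues, Set.forall_mem_range]
    exact fun i => (add_pos_of_nonneg_of_pos (mul_nonneg ha (h_nonneg i)) hb).ne'
  rw [nonsing_inv_eq_ringInverse, mul_ringInverse_mul_self_eq_cfc hA.1 h_ne]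
  exact re_trace_cfc_le hA.1 fun i =>
    monotoneOn_sq_div_mul_add ha hb (h_nonneg i) ((h_nonneg i).trans (hl i)) (hl i)

end Matrix

/-- key trace inequality, Eq. (15): for a symmetric positive definite
covariance matrix `S` with largest eigenvalue `lam1`,
`c²·M²·Tr(S·(c²·M·S + σ²·I)⁻¹·S) ≤ c²·M²·n·λ₁² / (c²·M·λ₁ + σ²)`. -/
theorem stmt1 {n : ℕ} (hn : 1 ≤ n) (S : Matrix (Fin n) (Fin n) ℝ)
    (hS : S.PosDef) (lam1 : ℝ)
    (hmax : ∀ i, hS.1.eigenvalues i ≤ lam1)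
    (hatt : ∃ i, hS.1.eigenvalues i = lam1)
    (M : ℕ) (hM : 1 ≤ M) (c σ : ℝ) (hc : 0 < c) (hσ : 0 < σ) :
    c ^ 2 * (M : ℝ) ^ 2 *
        (S * ((c ^ 2 * (M : ℝ)) • S + σ ^ 2 • (1 : Matrix (Fin n) (Fin n) ℝ))⁻¹ * S).trace ≤
      c ^ 2 * (M : ℝ) ^ 2 * n * lam1 ^ 2 / (c ^ 2 * (M : ℝ) * lam1 + σ ^ 2) := by
  simpa [mul_assoc, mul_div_assoc] using mul_le_mul_of_nonneg_left
    (stmt1_general hS.posSemidef (by positivity : 0 ≤ c ^ 2 * (M : ℝ)) (pow_pos hσ 2) hmax)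
    (by positivity : 0 ≤ c ^ 2 * (M : ℝ) ^ 2)
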